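/- Let n be a positive integer with coprime divisors a and b, let m = n/(ab), and let c be an integer with gcd(c, ab) = 1. Write rad(m) = m₁m₂m₃ with m₁ ∣ a, m₂ ∣ b, gcd(m₃, ab) = 1. Then the number of pairs (x,y) with 1 ≤ x ≤ n/a, 1 ≤ y ≤ n/b, gcd(x, n/a) = gcd(y, n/b) = 1 and ax + by ≡ c (mod n) equals m · ∏_{p ∣ m, p ∣ ab} (1 − 1/p) · ∏_{p ∣ n, p ∤ ab, p ∣ c} (1 − 1/p) · ∏_{p ∣ n, p ∤ abc} (1 − 2/p). -/

import Mathlib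

/-- Representative of `z` modulo `N` in `[1, N]`. -/
def repIcc (N : ℕ) (z : ℤ) : ℕ := ((z - 1) % (N : ℤ)).toNat + 1

theorem repIcc_cast (N : ℕ) (hN : 0 < N) (z : ℤ) :
    (repIcc N z : ℤ) = (z - 1) % (N : ℤ) + 1 := by
  have h := Int.emod_nonneg (z - 1) (b := (N : ℤ)) (by omega)
  unfold repIcc
  push_cast
  rw [Int.toNat_of_nonneg h]

theorem repIcc_mem (N : ℕ) (hN : 0 < N) (z : ℤ) : repIcc N z ∈ Finset.Icc 1 N := by
  have h := Int.emod_lt_of_pos (z - 1) (b := (N : ℤ)) (by omega)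
  have h2 := repIcc_cast N hN z
  have h3 := Int.emod_nonneg (z - 1) (b := (N : ℤ)) (by omega)
  rw [Finset.mem_Icc]
  omega

theorem repIcc_dvd (N : ℕ) (hN : 0 < N) (z : ℤ) : (N : ℤ) ∣ (repIcc N z : ℤ) - z := by
  rw [repIcc_cast N hN z]
  have := Int.emod_add_mul_ediv (z - 1) (N : ℤ)
  exact ⟨-((z - 1) / N), by linarith⟩

theorem repIcc_uniq (N : ℕ) (hN : 0 < N) (z : ℤ) (u : ℕ) (hu : u ∈ Finset.Icc 1 N)
    (h : (N : ℤ) ∣ (u : ℤ) - z) : repIcc N z = u := by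
  have h1 := repIcc_mem N hN z
  have h2 := repIcc_dvd N hN z
  rw [Finset.mem_Icc] at h1 hu
  have h3 : (N : ℤ) ∣ (repIcc N z : ℤ) - u := by
    have := dvd_sub h2 h
    simpa using this
  have h4 : |(repIcc N z : ℤ) - u| < N := by rw [abs_lt]; constructor <;> omega
  have := Int.eq_zero_of_abs_lt_dvd h3 h4
  omega

theorem count_mul (P Q : ℕ → Prop) [DecidablePred P] [DecidablePred Q] (r q : ℕ) (hr : 0 < r) (hq : 0 < q) (hrq : r.Coprime q)
    (hP : ∀ t, P (t % r) ↔ P t) (hQ : ∀ t, Q (t % q) ↔ Q t) :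
    ((Finset.range (r * q)).filter (fun t => P t ∧ Q t)).card =
      ((Finset.range r).filter P).card * ((Finset.range q).filter Q).card := by
  rw [← Finset.card_product]
  refine Finset.card_bij (fun t _ => (t % r, t % q)) ?_ ?_ ?_
  · intro t ht
    simp only [Finset.mem_filter, Finset.mem_range, Finset.mem_product] at ht ⊢
    exact ⟨⟨Nat.mod_lt _ hr, (hP t).2 ht.2.1⟩, ⟨Nat.mod_lt _ hq, (hQ t).2 ht.2.2⟩⟩
  · intro s hs t ht h
    simp only [Finset.mem_filter, Finset.mem_range, Prod.mk.injEq] at hs ht h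
    have : s ≡ t [MOD r * q] := (Nat.modEq_and_modEq_iff_modEq_mul hrq).1 ⟨h.1, h.2⟩
    exact Nat.ModEq.eq_of_lt_of_lt this hs.1 ht.1
  · rintro ⟨x, y⟩ h
    simp only [Finset.mem_filter, Finset.mem_range, Finset.mem_product] at h
    obtain ⟨⟨hx, hPx⟩, hy, hQy⟩ := h
    have k := Nat.chineseRemainder hrq x y
    have h1 : (k : ℕ) % r = x := by
      have := k.2.1
      rw [Nat.ModEq, Nat.mod_eq_of_lt hx] at this
      exact this
    have h2 : (k : ℕ) % q = y := by
      have := k.2.2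
      rw [Nat.ModEq, Nat.mod_eq_of_lt hy] at this
      exact this
    have e1 : (k : ℕ) % (r * q) % r = x := by rw [Nat.mod_mul_right_mod, h1]
    have e2 : (k : ℕ) % (r * q) % q = y := by rw [Nat.mod_mul_left_mod, h2]
    refine ⟨(k : ℕ) % (r * q), ?_, by rw [e1, e2]⟩
    simp only [Finset.mem_filter, Finset.mem_range]
    exact ⟨Nat.mod_lt _ (by positivity), (hP _).1 (by rw [e1]; exact hPx),
      (hQ _).1 (by rw [e2]; exact hQy)⟩

theorem count_period (P : ℕ → Prop) [DecidablePred P] (p k : ℕ) (hp : 0 < p) (hP : ∀ t, P (t % p) ↔ P t) :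
    ((Finset.range (p * k)).filter P).card = k * ((Finset.range p).filter P).card := by
  have : k * ((Finset.range p).filter P).card =
      (Finset.range k ×ˢ ((Finset.range p).filter P)).card := by simp
  rw [this]
  refine Finset.card_bij (fun t _ => (t / p, t % p)) ?_ ?_ ?_
  · intro t ht
    simp only [Finset.mem_filter, Finset.mem_range, Finset.mem_product] at ht ⊢
    exact ⟨Nat.div_lt_of_lt_mul ht.1, Nat.mod_lt _ hp, (hP t).2 ht.2⟩
  · intro s hs t ht h
    simp only [Prod.mk.injEq] at h
    rw [← Nat.div_add_mod s p, ← Nat.div_add_mod t p, h.1, h.2]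
  · rintro ⟨x, y⟩ h
    simp only [Finset.mem_filter, Finset.mem_range, Finset.mem_product] at h
    obtain ⟨hx, hy, hPy⟩ := h
    have e : (p * x + y) % p = y := by rw [Nat.mul_add_mod, Nat.mod_eq_of_lt hy]
    have e' : (p * x + y) / p = x := by
      rw [Nat.mul_add_div hp, Nat.div_eq_of_lt hy, add_zero]
    refine ⟨p * x + y, ?_, by rw [e, e']⟩
    simp only [Finset.mem_filter, Finset.mem_range]
    refine ⟨by nlinarith, (hP _).1 (by rw [e]; exact hPy)⟩

theorem count_sieve (P : ℕ → ℕ → Prop) [∀ p, DecidablePred (P p)] (hP : ∀ p d t, p ∣ d → (P p (t % d) ↔ P p t)) (m : ℕ)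
    (hm : 0 < m) :
    (((Finset.range m).filter (fun t => ∀ p ∈ m.primeFactors, P p t)).card : ℚ) =
      m * ∏ p ∈ m.primeFactors, ((((Finset.range p).filter (P p)).card : ℚ) / p) := by
  induction m using Nat.recOnPosPrimePosCoprime with
  | zero => omega
  | one => simp
  | prime_pow p k hp hk =>
    obtain ⟨j, rfl⟩ : ∃ j, k = j + 1 := ⟨k - 1, by omega⟩
    rw [Nat.primeFactors_prime_pow (by omega) hp]
    simp only [Finset.mem_singleton, forall_eq, Finset.prod_singleton]
    have := count_period (P p) p (p ^ j) hp.pos (fun t => hP p p t dvd_rfl)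
    rw [pow_succ', this]
    have : (p : ℚ) ≠ 0 := by exact_mod_cast hp.ne_zero
    push_cast
    field_simp
  | coprime a b ha hb hab iha ihb =>
    have ha0 : 0 < a := by omega
    have hb0 : 0 < b := by omega
    have := count_mul (fun t => ∀ p ∈ a.primeFactors, P p t) (fun t => ∀ p ∈ b.primeFactors, P p t)
      a b ha0 hb0 hab
      (fun t => forall₂_congr fun p hp => hP p a t (Nat.dvd_of_mem_primeFactors hp))
      (fun t => forall₂_congr fun p hp => hP p b t (Nat.dvd_of_mem_primeFactors hp))
    have hu := hab.primeFactors_mul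
    rw [hu, Finset.prod_union hab.disjoint_primeFactors]
    have e : ((Finset.range (a * b)).filter
        (fun t => ∀ p ∈ a.primeFactors ∪ b.primeFactors, P p t)).card =
        ((Finset.range (a * b)).filter (fun t => (∀ p ∈ a.primeFactors, P p t) ∧
          ∀ p ∈ b.primeFactors, P p t)).card := by
      congr 1
      apply Finset.filter_congr
      intro t _
      simp only [Finset.mem_union]
      exact ⟨fun h => ⟨fun p hp => h p (Or.inl hp), fun p hp => h p (Or.inr hp)⟩,
        fun h p hp => hp.elim (h.1 p) (h.2 p)⟩
    rw [e, this]
    push_cast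
    rw [iha ha0, ihb hb0]
    ring

theorem exists_root (p : ℕ) (hp : p.Prime) (x b : ℤ) (hb : ¬ (p : ℤ) ∣ b) :
    ∃ r, r < p ∧ ∀ t : ℕ, t < p → ((p : ℤ) ∣ x + b * t ↔ t = r) := by
  have hpi : Prime (p : ℤ) := Nat.prime_iff_prime_int.1 hp
  have hc : IsCoprime (p : ℤ) b := (hpi.coprime_iff_not_dvd).2 hb
  obtain ⟨u, v, huv⟩ := hc
  have hp0 : (p : ℤ) ≠ 0 := by exact_mod_cast hp.ne_zero
  have h0 := Int.emod_nonneg (-x * v) hp0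
  have h1 := Int.emod_lt_of_pos (-x * v) (b := (p : ℤ)) (by exact_mod_cast hp.pos)
  obtain ⟨r, hr⟩ := Int.eq_ofNat_of_zero_le h0
  have hd : (p : ℤ) ∣ x + b * r := by
    have h2 := Int.emod_add_mul_ediv (-x * v) (p : ℤ)
    rw [hr] at h2
    have : (r : ℤ) = -x * v - p * (-x * v / p) := by linarith
    rw [this]
    exact ⟨u * x - b * (-x * v / p), by linear_combination (-x) * huv⟩
  refine ⟨r, by omega, fun t ht => ⟨fun h => ?_, fun h => h ▸ hd⟩⟩
  have h3 : (p : ℤ) ∣ b * ((t : ℤ) - r) := by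
    have := dvd_sub h hd
    ring_nf at this ⊢
    exact this
  have h4 := (hpi.dvd_or_dvd h3).resolve_left hb
  have h5 : |(t : ℤ) - r| < p := by rw [abs_lt]; constructor <;> omega
  have := Int.eq_zero_of_abs_lt_dvd h4 h5
  omega

theorem count_prime (p : ℕ) (hp : p.Prime) (a b : ℕ) (c x y : ℤ)
    (hxy : (a : ℤ) * x + b * y = c) (hab : Nat.Coprime a b)
    (hc : p ∣ a * b → ¬ (p : ℤ) ∣ c) :
    ((((Finset.range p).filter
      (fun t : ℕ => ¬ (p : ℤ) ∣ x + b * t ∧ ¬ (p : ℤ) ∣ y - a * t)).card : ℚ) / p) =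
      (if p ∣ a * b then (1 - 1 / (p : ℚ)) else 1) *
      (if ¬ p ∣ a * b ∧ (p : ℤ) ∣ c then (1 - 1 / (p : ℚ)) else 1) *
      (if ¬ (p : ℤ) ∣ (a : ℤ) * b * c then (1 - 2 / (p : ℚ)) else 1) := by
  have hpi : Prime (p : ℤ) := Nat.prime_iff_prime_int.1 hp
  have hpq : (p : ℚ) ≠ 0 := by exact_mod_cast hp.ne_zero
  have hp1 := hp.two_le
  have habp : p ∣ a * b ↔ (p : ℤ) ∣ (a : ℤ) * b := by exact_mod_cast Int.natCast_dvd_natCast.symm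
  have one : ∀ r, r < p → ∀ (f : ℕ → Prop) [DecidablePred f], (∀ t < p, (f t ↔ t ≠ r)) →
      (((Finset.range p).filter f).card : ℚ) / p = 1 - 1 / p := by
    intro r hr f _ hf
    have : (Finset.range p).filter f = (Finset.range p).erase r := by
      ext t
      simp only [Finset.mem_filter, Finset.mem_range, Finset.mem_erase]
      constructor
      · rintro ⟨h1, h2⟩
        exact ⟨(hf t h1).1 h2, h1⟩
      · rintro ⟨h1, h2⟩
        exact ⟨h2, (hf t h2).2 h1⟩
    rw [this, Finset.card_erase_of_mem (Finset.mem_range.2 hr), Finset.card_range,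
      Nat.cast_sub (by omega)]
    field_simp
    simp
  by_cases hpab : p ∣ a * b
  · have hc' := hc hpab
    have h3 : (p : ℤ) ∣ (a : ℤ) * b * c := dvd_mul_of_dvd_left (habp.1 hpab) _
    rw [if_pos hpab, if_neg (by tauto), if_neg (by tauto), mul_one, mul_one]
    rcases (hp.dvd_mul).1 hpab with h | h
    · have hb : ¬ (p : ℤ) ∣ b := by
        intro hb
        exact hp.one_lt.ne' (Nat.eq_one_of_dvd_coprimes hab h (Int.natCast_dvd_natCast.1 hb))
      have ha : (p : ℤ) ∣ a := Int.natCast_dvd_natCast.2 h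
      obtain ⟨r, hr, hr'⟩ := exists_root p hp x b hb
      refine one r hr _ fun t ht => ?_
      rw [hr' t ht]
      refine ⟨fun h => h.1, fun h => ⟨h, fun h2 => hc' ?_⟩⟩
      have hy : (p : ℤ) ∣ y := (dvd_sub_left (dvd_mul_of_dvd_left ha _)).1 h2
      rw [← hxy]
      exact dvd_add (dvd_mul_of_dvd_left ha _) (dvd_mul_of_dvd_right hy _)
    · have ha : ¬ (p : ℤ) ∣ -(a : ℤ) := by
        intro ha
        rw [dvd_neg] at ha
        exact hp.one_lt.ne' (Nat.eq_one_of_dvd_coprimes hab (Int.natCast_dvd_natCast.1 ha) h)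
      have hb : (p : ℤ) ∣ b := Int.natCast_dvd_natCast.2 h
      obtain ⟨r, hr, hr'⟩ := exists_root p hp y (-a) ha
      simp only [neg_mul, ← sub_eq_add_neg] at hr'
      refine one r hr _ fun t ht => ?_
      rw [hr' t ht]
      refine ⟨fun h => h.2, fun h => ⟨fun h2 => hc' ?_, h⟩⟩
      have hx : (p : ℤ) ∣ x := (dvd_add_left (dvd_mul_of_dvd_left hb _)).1 h2
      rw [← hxy]
      exact dvd_add (dvd_mul_of_dvd_right hx _) (dvd_mul_of_dvd_left hb _)
  · have hb : ¬ (p : ℤ) ∣ b := fun h => hpab (habp.2 (dvd_mul_of_dvd_right h _))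
    have ha : ¬ (p : ℤ) ∣ -(a : ℤ) := fun h =>
      hpab (habp.2 (dvd_mul_of_dvd_left (dvd_neg.1 h) _))
    obtain ⟨r, hr, hr'⟩ := exists_root p hp x b hb
    obtain ⟨s, hs, hs'⟩ := exists_root p hp y (-a) ha
    simp only [neg_mul, ← sub_eq_add_neg] at hs'
    have h1 := (hr' r hr).2 rfl
    have hrs : (p : ℤ) ∣ c ↔ r = s := by
      rw [← hs' r hr]
      have e : c = a * (x + b * r) + b * (y - a * r) := by rw [← hxy]; ring
      rw [e, dvd_add_right (dvd_mul_of_dvd_right h1 _)]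
      exact ⟨fun h => (hpi.dvd_or_dvd h).resolve_left hb, fun h => dvd_mul_of_dvd_right h _⟩
    by_cases hpc : (p : ℤ) ∣ c
    · have h3 : (p : ℤ) ∣ (a : ℤ) * b * c := dvd_mul_of_dvd_right hpc _
      rw [if_neg hpab, if_pos ⟨hpab, hpc⟩, if_neg (by tauto), mul_one, one_mul]
      refine one r hr _ fun t ht => ?_
      rw [hr' t ht, hs' t ht, ← hrs.1 hpc]
      tauto
    · have h3 : ¬ (p : ℤ) ∣ (a : ℤ) * b * c := fun h =>
        (hpi.dvd_or_dvd h).elim (fun h => hpab (habp.2 h)) hpc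
      rw [if_neg hpab, if_neg (by tauto), if_pos h3, one_mul, one_mul]
      have hne : r ≠ s := fun h => hpc (hrs.2 h)
      have : (Finset.range p).filter
          (fun t : ℕ => ¬ (p : ℤ) ∣ x + b * t ∧ ¬ (p : ℤ) ∣ y - a * t) =
          ((Finset.range p).erase r).erase s := by
        ext t
        simp only [Finset.mem_filter, Finset.mem_range, Finset.mem_erase]
        constructor
        · rintro ⟨h, h1, h2⟩
          rw [hr' t h] at h1
          rw [hs' t h] at h2
          exact ⟨h2, h1, h⟩
        · rintro ⟨h2, h1, h⟩
          rw [hr' t h, hs' t h]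
          exact ⟨h, h1, h2⟩
      rw [this, Finset.card_erase_of_mem (by simp [hs, hne.symm]),
        Finset.card_erase_of_mem (Finset.mem_range.2 hr), Finset.card_range, Nat.sub_sub,
        Nat.cast_sub (by omega)]
      field_simp
      simp

theorem coprime_rep_iff (m b : ℕ) (hm : 0 < m) (hb : 0 < b) (z : ℤ)
    (h : ∀ p : ℕ, p.Prime → p ∣ b → ¬ (p : ℤ) ∣ z) :
    Nat.Coprime (repIcc (b * m) z) (b * m) ↔ ∀ p ∈ m.primeFactors, ¬ (p : ℤ) ∣ z := by
  have hN : 0 < b * m := by positivity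
  have hd := repIcc_dvd (b * m) hN z
  have key : ∀ p : ℕ, p ∣ b * m → ((p : ℤ) ∣ z ↔ p ∣ repIcc (b * m) z) := by
    intro p hp
    rw [← Int.natCast_dvd_natCast]
    have : (p : ℤ) ∣ (repIcc (b * m) z : ℤ) - z := (Int.natCast_dvd_natCast.2 hp).trans hd
    exact (dvd_iff_dvd_of_dvd_sub this).symm
  constructor
  · intro hc p hp hz
    have hpm := Nat.dvd_of_mem_primeFactors hp
    have hpp := Nat.prime_of_mem_primeFactors hp
    have hpn : p ∣ b * m := dvd_mul_of_dvd_right hpm _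
    exact hpp.one_lt.ne' (Nat.eq_one_of_dvd_coprimes hc ((key p hpn).1 hz) hpn)
  · intro hc
    apply Nat.coprime_of_dvd
    intro p hp h1 h2
    have hz := (key p h2).2 h1
    rcases hp.dvd_mul.1 h2 with h3 | h3
    · exact h p hp h3 hz
    · exact hc p (Nat.mem_primeFactors.2 ⟨hp, h3, hm.ne'⟩) hz

theorem stmt_12 (n a b : ℕ) (hn : 0 < n) (ha : a ∣ n) (hb : b ∣ n)
    (hab : Nat.Coprime a b) (m : ℕ) (hm : m = n / (a * b))
    (c : ℤ) (hc : Int.gcd c ((a : ℤ) * b) = 1) :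
    ((((Finset.Icc 1 (n / a)) ×ˢ (Finset.Icc 1 (n / b))).filter
        (fun p => Nat.Coprime p.1 (n / a) ∧ Nat.Coprime p.2 (n / b) ∧
          ((a : ℤ) * p.1 + (b : ℤ) * p.2 ≡ c [ZMOD n]))).card : ℚ) =
      (m : ℚ) * (∏ p ∈ m.primeFactors.filter (fun p => p ∣ a * b), (1 - 1 / (p : ℚ)))
        * (∏ p ∈ n.primeFactors.filter (fun p => ¬ p ∣ a * b ∧ (p : ℤ) ∣ c),
            (1 - 1 / (p : ℚ)))
        * (∏ p ∈ n.primeFactors.filter (fun p : ℕ => ¬ ((p : ℤ) ∣ ((a : ℤ) * b * c))),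
            (1 - 2 / (p : ℚ))) := by 
  have ha0 : 0 < a := Nat.pos_of_dvd_of_pos ha hn
  have hb0 : 0 < b := Nat.pos_of_dvd_of_pos hb hn
  have habn : a * b ∣ n := hab.mul_dvd_of_dvd_of_dvd ha hb
  have hnm : n = a * b * m := by rw [hm, Nat.mul_div_cancel' habn]
  have hm0 : 0 < m := by
    rcases Nat.eq_zero_or_pos m with h | h
    · rw [h] at hnm; omega
    · exact h
  have hna : n / a = b * m := by
    rw [hnm, mul_assoc, Nat.mul_div_cancel_left _ ha0]
  have hnb : n / b = a * m := by
    rw [hnm, mul_comm a b, mul_assoc, Nat.mul_div_cancel_left _ hb0]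
  obtain ⟨x, y, hxy⟩ : ∃ x y : ℤ, (a : ℤ) * x + b * y = c := by
    obtain ⟨u, v, huv⟩ := Nat.isCoprime_iff_coprime.2 hab
    exact ⟨c * u, c * v, by linear_combination c * huv⟩
  have hcp : ∀ p : ℕ, p.Prime → p ∣ a * b → ¬ (p : ℤ) ∣ c := by
    intro p hp h1 h2
    have h3 : (p : ℤ) ∣ (a : ℤ) * b := by exact_mod_cast Int.natCast_dvd_natCast.2 h1
    have := Int.dvd_coe_gcd h2 h3
    rw [hc] at this
    exact hp.one_lt.ne' (Nat.dvd_one.1 (Int.natCast_dvd_natCast.1 this))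
  have hbx : ∀ t : ℤ, ∀ p : ℕ, p.Prime → p ∣ b → ¬ (p : ℤ) ∣ x + b * t := by
    intro t p hp hpb h
    have hb' : (p : ℤ) ∣ b := Int.natCast_dvd_natCast.2 hpb
    apply hcp p hp (dvd_mul_of_dvd_right hpb _)
    have hx : (p : ℤ) ∣ x := (dvd_add_left (dvd_mul_of_dvd_left hb' _)).1 h
    rw [← hxy]
    exact dvd_add (dvd_mul_of_dvd_right hx _) (dvd_mul_of_dvd_left hb' _)
  have hay : ∀ t : ℤ, ∀ p : ℕ, p.Prime → p ∣ a → ¬ (p : ℤ) ∣ y - a * t := by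
    intro t p hp hpa h
    have ha' : (p : ℤ) ∣ a := Int.natCast_dvd_natCast.2 hpa
    apply hcp p hp (dvd_mul_of_dvd_left hpa _)
    have hy : (p : ℤ) ∣ y := (dvd_sub_left (dvd_mul_of_dvd_left ha' _)).1 h
    rw [← hxy]
    exact dvd_add (dvd_mul_of_dvd_left ha' _) (dvd_mul_of_dvd_right hy _)
  have hbm : 0 < b * m := by positivity
  have ham : 0 < a * m := by positivity
  have ha0' : (a : ℤ) ≠ 0 := by omega
  have hb0' : (b : ℤ) ≠ 0 := by omega
  have hcop : IsCoprime (a : ℤ) b := Nat.isCoprime_iff_coprime.2 hab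
  have hnz : (n : ℤ) = a * b * m := by rw [hnm]; push_cast; ring
  set P : ℕ → ℕ → Prop := fun p t => ¬ (p : ℤ) ∣ x + b * t ∧ ¬ (p : ℤ) ∣ y - a * t with hPdef
  haveI hdec : ∀ p, DecidablePred (P p) := fun p t => by
    simp only [hPdef]
    infer_instance
  have hcard : (((Finset.Icc 1 (n / a)) ×ˢ (Finset.Icc 1 (n / b))).filter
        (fun p => Nat.Coprime p.1 (n / a) ∧ Nat.Coprime p.2 (n / b) ∧
          ((a : ℤ) * p.1 + (b : ℤ) * p.2 ≡ c [ZMOD n]))).card =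
      ((Finset.range m).filter (fun t => ∀ p ∈ m.primeFactors, P p t)).card := by
    symm
    rw [hna, hnb]
    refine Finset.card_bij
      (fun t _ => (repIcc (b * m) (x + b * t), repIcc (a * m) (y - a * t))) ?_ ?_ ?_
    · intro t ht
      simp only [Finset.mem_filter, Finset.mem_range, Finset.mem_product] at ht ⊢
      refine ⟨⟨repIcc_mem _ hbm _, repIcc_mem _ ham _⟩,
        (coprime_rep_iff m b hm0 hb0 _ (hbx t)).2 fun p hp => (ht.2 p hp).1,
        (coprime_rep_iff m a hm0 ha0 _ (hay t)).2 fun p hp => (ht.2 p hp).2, ?_⟩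
      obtain ⟨k, hk⟩ := repIcc_dvd _ hbm (x + b * t)
      obtain ⟨l, hl⟩ := repIcc_dvd _ ham (y - a * t)
      apply Int.ModEq.symm
      rw [Int.modEq_iff_dvd, hnz]
      push_cast at hk hl
      exact ⟨k + l, by linear_combination a * hk + b * hl + hxy⟩
    · intro s hs t ht h
      simp only [Finset.mem_filter, Finset.mem_range, Prod.mk.injEq] at hs ht h
      have h1 := repIcc_dvd _ hbm (x + b * s)
      have h2 := repIcc_dvd _ hbm (x + b * t)
      rw [h.1] at h1
      have h3 := dvd_sub h2 h1
      have h4 : (b : ℤ) * m ∣ b * ((s : ℤ) - t) := by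
        push_cast at h3
        have e : (b : ℤ) * ((s : ℤ) - t) = (repIcc (b * m) (x + b * t) - (x + b * t)) -
          (repIcc (b * m) (x + b * t) - (x + b * s)) := by ring
        rw [e]
        exact h3
      have h5 := (mul_dvd_mul_iff_left hb0').1 h4
      have h6 : |(s : ℤ) - t| < m := by rw [abs_lt]; constructor <;> omega
      have := Int.eq_zero_of_abs_lt_dvd h5 h6
      omega
    · rintro ⟨u, v⟩ h
      simp only [Finset.mem_filter, Finset.mem_product] at h
      obtain ⟨⟨hu, hv⟩, hcu, hcv, hmod⟩ := h
      have hd := (Int.modEq_iff_dvd.1 hmod.symm)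
      rw [hnz] at hd
      obtain ⟨k, hk⟩ := hd
      have hbd : (b : ℤ) ∣ (u : ℤ) - x := by
        apply hcop.symm.dvd_of_dvd_mul_left
        exact ⟨a * m * k - (v - y), by linear_combination hk - hxy⟩
      obtain ⟨w, hw⟩ := hbd
      have hm0' : (m : ℤ) ≠ 0 := by omega
      obtain ⟨t, ht⟩ := Int.eq_ofNat_of_zero_le (Int.emod_nonneg w hm0')
      have htm : t < m := by
        have := Int.emod_lt_of_pos w (b := (m : ℤ)) (by omega)
        omega
      have hwt := Int.emod_add_mul_ediv w (m : ℤ)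
      rw [ht] at hwt
      set e := w / (m : ℤ)
      have e1 : repIcc (b * m) (x + b * t) = u := by
        apply repIcc_uniq _ hbm _ _ hu
        push_cast
        exact ⟨e, by linear_combination hw - b * hwt⟩
      have e2 : repIcc (a * m) (y - a * t) = v := by
        apply repIcc_uniq _ ham _ _ hv
        push_cast
        refine ⟨k - e, ?_⟩
        apply mul_left_cancel₀ hb0'
        linear_combination hk - hxy - a * hw + a * b * hwt
      refine ⟨t, ?_, by rw [e1, e2]⟩
      simp only [Finset.mem_filter, Finset.mem_range]
      rw [← e1, coprime_rep_iff m b hm0 hb0 _ (hbx t)] at hcu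
      rw [← e2, coprime_rep_iff m a hm0 ha0 _ (hay t)] at hcv
      exact ⟨htm, fun p hp => ⟨hcu p hp, hcv p hp⟩⟩
  rw [hcard, count_sieve P ?_ m hm0]
  · have hf : ∀ p ∈ m.primeFactors, ((((Finset.range p).filter (P p)).card : ℚ) / p) =
        (if p ∣ a * b then (1 - 1 / (p : ℚ)) else 1) *
        (if ¬ p ∣ a * b ∧ (p : ℤ) ∣ c then (1 - 1 / (p : ℚ)) else 1) *
        (if ¬ (p : ℤ) ∣ (a : ℤ) * b * c then (1 - 2 / (p : ℚ)) else 1) := by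
      intro p hp
      rw [← count_prime p (Nat.prime_of_mem_primeFactors hp) a b c x y hxy hab
        (hcp p (Nat.prime_of_mem_primeFactors hp))]
      congr!
    rw [Finset.prod_congr rfl hf, Finset.prod_mul_distrib, Finset.prod_mul_distrib,
      ← Finset.prod_filter, ← Finset.prod_filter, ← Finset.prod_filter]
    have hpm : ∀ p, ¬ p ∣ a * b → (p ∈ n.primeFactors ↔ p ∈ m.primeFactors) := by
      intro p hp
      simp only [Nat.mem_primeFactors]
      constructor
      · rintro ⟨h1, h2, -⟩
        rw [hnm] at h2
        exact ⟨h1, (h1.dvd_mul.1 h2).resolve_left hp, hm0.ne'⟩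
      · rintro ⟨h1, h2, -⟩
        exact ⟨h1, hnm ▸ dvd_mul_of_dvd_right h2 _, hn.ne'⟩
    have s1 : n.primeFactors.filter (fun p => ¬ p ∣ a * b ∧ (p : ℤ) ∣ c) =
        m.primeFactors.filter (fun p => ¬ p ∣ a * b ∧ (p : ℤ) ∣ c) := by
      ext p
      simp only [Finset.mem_filter]
      exact and_congr_left fun h => hpm p h.1
    have s2 : n.primeFactors.filter (fun p : ℕ => ¬ ((p : ℤ) ∣ ((a : ℤ) * b * c))) =
        m.primeFactors.filter (fun p : ℕ => ¬ ((p : ℤ) ∣ ((a : ℤ) * b * c))) := by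
      ext p
      simp only [Finset.mem_filter]
      refine and_congr_left fun h => hpm p fun h' => h (dvd_mul_of_dvd_left ?_ _)
      exact_mod_cast Int.natCast_dvd_natCast.2 h'
    rw [s1, s2]
    simp only [mul_assoc]
  · intro p d t hpd
    have hpd' : (p : ℤ) ∣ d := Int.natCast_dvd_natCast.2 hpd
    have hz : (p : ℤ) ∣ ((t % d : ℕ) : ℤ) - t := by
      push_cast
      have := Int.emod_add_mul_ediv (t : ℤ) (d : ℤ)
      exact hpd'.trans ⟨-((t : ℤ) / d), by linarith⟩
    have i1 : (p : ℤ) ∣ x + b * ((t % d : ℕ) : ℤ) ↔ (p : ℤ) ∣ x + b * t := by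
      apply dvd_iff_dvd_of_dvd_sub
      have := dvd_mul_of_dvd_right hz (b : ℤ)
      convert this using 1
      ring
    have i2 : (p : ℤ) ∣ y - a * ((t % d : ℕ) : ℤ) ↔ (p : ℤ) ∣ y - a * t := by
      apply dvd_iff_dvd_of_dvd_sub
      have := dvd_mul_of_dvd_right hz (-a : ℤ)
      convert this using 1
      ring
    simp only [hPdef]
    rw [i1, i2]
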